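/- Let α ∈ (0, 1/4) and α' = (1 − √(1 − 4α))/2; then α' ∈ (α, 1/2), and for every ε > 0 there exists n₀ such that for all n ≥ n₀, every pair of integers (m_A, m_B) achievable for the deterministic combinatorial Slepian–Wolf scheme with parameters (n, ⌊αn⌋) by a semi-linear pair of encodings satisfies m_A + m_B ≥ (1 + h(α'))·n − ε·n, m_A ≥ h(α')·n − ε·n, and m_B ≥ h(α')·n − ε·n. -/

import Mathlib

/-!
Fibres of the encodings are error-correcting codes, and the Elias–Bassalygo bound limits their size.

If `c ≠ c'` lie in one fibre of `Code_A` and are at distance at most `2T`, a common midpoint `y` gives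
pairs `(c, y)`, `(c', y)` with equal encodings, contradicting unique decodability. So some fibre is a
code of minimum distance at least `2T + 1` with at least `2 ^ (n - m_A)` elements (`exists_code_A`);
the same holds for `Code_B`. If moreover `Code_A` is linear, take a large fibre `F_A` of `Code_A` and a
large fibre `F_B` of `Code_B`: a midpoint argument (`exists_code_AB`) shows that the sums `y + c` with
`y ∈ F_B`, `c ∈ F_A` are distinct and pairwise at distance at least `2T + 1`, which gives a code
with at least `2 ^ (2n - m_A - m_B)` elements.

The upper bound for the size of such codes comes from averaging over spheres of radius `w`
(`elias`) together with the Johnson bound on the codewords in one sphere (`johnson`). The latter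
applies as soon as `2w(n - w)/n < 2T + 1`. Since `α'(1 - α') = α`, the radius `w = ⌊α' n⌋ - K` is
admissible for a suitable constant `K`, so a code has at most
`2 ^ n * poly(n) / C(n, w)` elements. The estimate `C(n, w) ≥ 2 ^ (n h(w/n)) / (n + 1)`
(`log_choose_ge`) and continuity of `h` turn this into `2 ^ ((1 - h(α') + o(1)) n)`.
-/

/-- The binary entropy function `h(α) = −α·log₂ α − (1−α)·log₂(1−α)`. -/
noncomputable def binEnt (a : ℝ) : ℝ :=
  -a * Real.logb 2 a - (1 - a) * Real.logb 2 (1 - a)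

/-- A pair of encodings is uniquely decodable for the combinatorial Slepian–Wolf
scheme with parameters `(n, T)`. -/
def UniquelyDecodable {n mA mB : ℕ} (T : ℕ)
    (CodeA : (Fin n → Bool) → (Fin mA → Bool))
    (CodeB : (Fin n → Bool) → (Fin mB → Bool)) : Prop :=
  ∀ x y x' y' : Fin n → Bool,
    hammingDist x y ≤ T → hammingDist x' y' ≤ T →
    CodeA x = CodeA x' → CodeB y = CodeB y' → (x, y) = (x', y')

/-- Identification of `{0,1}` with the field `𝔽₂`. -/
def toF2 {n : ℕ} (x : Fin n → Bool) : Fin n → ZMod 2 := fun i => if x i then 1 else 0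

/-- An encoding map is linear if, under the identification of `{0,1}` with `𝔽₂`,
it is given by an `𝔽₂`-linear map `𝔽₂ⁿ → 𝔽₂^m`. -/
def IsLinearEncoding {n m : ℕ} (C : (Fin n → Bool) → (Fin m → Bool)) : Prop :=
  ∃ f : (Fin n → ZMod 2) →ₗ[ZMod 2] (Fin m → ZMod 2),
    ∀ x, toF2 (C x) = f (toF2 x)

/-- `(mA, mB)` is achievable for the deterministic combinatorial Slepian–Wolf
scheme with parameters `(n, T)` by a semi-linear pair of encodings (at least one
of the two encodings is `𝔽₂`-linear). -/
def AchievableSemiLinear (n T mA mB : ℕ) : Prop :=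
  ∃ (CodeA : (Fin n → Bool) → (Fin mA → Bool))
    (CodeB : (Fin n → Bool) → (Fin mB → Bool)),
    UniquelyDecodable T CodeA CodeB ∧
      (IsLinearEncoding CodeA ∨ IsLinearEncoding CodeB)


/-! ### The Elias–Bassalygo bound -/

/-- Johnson bound: a code of minimum distance `d` on the sphere of radius `w` about `u` has at most
`n * d` elements if `2w(n - w) < nd`. The sum of all pairwise distances is at least
`N(N - 1)d`; counting it coordinate by coordinate and applying Cauchy–Schwarz bounds it
by `2N²w(n - w)/n`. -/
theorem johnson {n d w : ℕ} (S : Finset (Fin n → Bool)) (u : Fin n → Bool)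
    (hw : w ≤ n)
    (hS : ∀ x ∈ S, ∀ y ∈ S, x ≠ y → d ≤ hammingDist x y)
    (hu : ∀ x ∈ S, hammingDist x u = w)
    (hlt : 2 * w * (n - w) < n * d) : S.card ≤ n * d := by
  rcases S.eq_empty_or_nonempty with rfl | hne
  · simp
  have hNpos : (0 : ℤ) < S.card := by exact_mod_cast hne.card_pos
  -- `f k` counts the codewords that differ from the centre in coordinate `k`.
  let f : Fin n → ℤ := fun k => ∑ x ∈ S, if x k ≠ u k then 1 else 0
  have hdist : ∀ x y : Fin n → Bool,
      (hammingDist x y : ℤ) = ∑ k, if x k ≠ y k then (1 : ℤ) else 0 := by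
    intro x y
    rw [hammingDist, Finset.natCast_card_filter]
  have hsum : ∑ k, f k = S.card * w := by
    simp only [f]
    rw [Finset.sum_comm, Finset.sum_congr rfl (fun x hx => by rw [← hdist, hu x hx])]
    simp
  have hpt : ∀ (x y : Fin n → Bool) (k : Fin n), (if x k ≠ y k then (1 : ℤ) else 0)
      = (if x k ≠ u k then 1 else 0) + (if y k ≠ u k then 1 else 0)
        - 2 * ((if x k ≠ u k then 1 else 0) * (if y k ≠ u k then 1 else 0)) := by
    intro x y k
    cases x k <;> cases y k <;> cases u k <;> simp
  have hpairs : ∑ x ∈ S, ∑ y ∈ S, (hammingDist x y : ℤ)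
      = 2 * S.card * (S.card * w) - 2 * ∑ k, f k ^ 2 := by
    have h1 : ∑ x ∈ S, ∑ y ∈ S, (hammingDist x y : ℤ)
        = ∑ k, ∑ x ∈ S, ∑ y ∈ S, if x k ≠ y k then (1 : ℤ) else 0 := by
      rw [Finset.sum_comm (s := Finset.univ)]
      refine Finset.sum_congr rfl fun x _ => ?_
      rw [Finset.sum_comm]
      exact Finset.sum_congr rfl fun y _ => hdist x y
    have h2 : ∀ k, (∑ x ∈ S, ∑ y ∈ S, if x k ≠ y k then (1 : ℤ) else 0)
        = 2 * S.card * f k - 2 * f k ^ 2 := by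
      intro k
      rw [Finset.sum_congr rfl fun x _ => Finset.sum_congr rfl fun y _ => hpt x y k]
      simp only [Finset.sum_sub_distrib, Finset.sum_add_distrib, ← Finset.mul_sum,
        ← Finset.sum_mul, Finset.sum_const, nsmul_eq_mul, ← Finset.mul_sum]
      simp only [f]
      ring
    rw [h1, Finset.sum_congr rfl fun k _ => h2 k, Finset.sum_sub_distrib, ← Finset.mul_sum,
      ← Finset.mul_sum, hsum]
  have hlow : (S.card : ℤ) * (S.card - 1) * d ≤ ∑ x ∈ S, ∑ y ∈ S, (hammingDist x y : ℤ) := by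
    have : ∀ x ∈ S, ((S.card : ℤ) - 1) * d ≤ ∑ y ∈ S, (hammingDist x y : ℤ) := by
      intro x hx
      rw [← Finset.add_sum_erase _ _ hx]
      have h3 : (S.erase x).card • (d : ℤ) ≤ ∑ y ∈ S.erase x, (hammingDist x y : ℤ) := by
        refine Finset.card_nsmul_le_sum _ _ _ fun y hy => ?_
        rw [Finset.mem_erase] at hy
        exact_mod_cast hS x hx y hy.2 hy.1.symm
      rw [Finset.card_erase_of_mem hx, nsmul_eq_mul, Nat.cast_sub hne.card_pos] at h3
      simpa using h3
    calc (S.card : ℤ) * (S.card - 1) * d = S.card • (((S.card : ℤ) - 1) * d) := by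
          rw [nsmul_eq_mul]; ring
      _ ≤ _ := Finset.card_nsmul_le_sum _ _ _ this
  have hcs : (S.card * w : ℤ) ^ 2 ≤ n * ∑ k, f k ^ 2 := by
    have := sq_sum_le_card_mul_sum_sq (s := (Finset.univ : Finset (Fin n))) (f := f)
    rw [hsum] at this
    simpa using this
  rw [hpairs] at hlow
  zify [hw] at hlt
  zify
  set N : ℤ := (S.card : ℤ)
  have hmain : N * (N * (n * d - 2 * w * (n - w))) ≤ N * (n * d) := by
    nlinarith [mul_le_mul_of_nonneg_left hlow (Int.natCast_nonneg n)]
  have h4 := le_of_mul_le_mul_left hmain hNpos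
  nlinarith

theorem card_sphere {n : ℕ} (c : Fin n → Bool) (w : ℕ) :
    (Finset.univ.filter fun u => hammingDist c u = w).card = n.choose w := by
  have hc : (Finset.powersetCard w (Finset.univ : Finset (Fin n))).card = n.choose w := by simp
  rw [← hc]
  refine Finset.card_bij' (fun u _ => Finset.univ.filter fun i => c i ≠ u i)
    (fun s _ => fun i => if i ∈ s then !c i else c i) ?_ ?_ ?_ ?_
  · intro u hu
    simpa [Finset.mem_powersetCard, hammingDist] using hu
  · intro s hs
    simp only [Finset.mem_powersetCard, Finset.subset_univ, true_and] at hs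
    rw [Finset.mem_filter, ← hs]
    refine ⟨Finset.mem_univ _, ?_⟩
    rw [hammingDist]
    congr 1
    ext i
    by_cases h : i ∈ s <;> simp [h]
  · intro u _
    ext i
    cases h : c i <;> cases h' : u i <;> simp [h, h']
  · intro s _
    ext i
    by_cases h : i ∈ s <;> simp [h]

/-- Each word lies on `n.choose w` of the spheres of radius `w`, while each sphere contains at most
`n * d` codewords by the Johnson bound. -/
theorem elias {n d w : ℕ} (C : Finset (Fin n → Bool)) (hw : w ≤ n)
    (hC : ∀ x ∈ C, ∀ y ∈ C, x ≠ y → d ≤ hammingDist x y)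
    (hlt : 2 * w * (n - w) < n * d) : C.card * n.choose w ≤ 2 ^ n * (n * d) := by
  have h1 : ∑ u : Fin n → Bool, (C.filter fun c => hammingDist c u = w).card
      = C.card * n.choose w := by
    simp_rw [Finset.card_filter]
    rw [Finset.sum_comm]
    simp_rw [← Finset.card_filter, card_sphere]
    simp
  rw [← h1]
  calc _ ≤ (Finset.univ : Finset (Fin n → Bool)).card • (n * d) := by
        refine Finset.sum_le_card_nsmul _ _ _ fun u _ => ?_
        refine johnson _ u hw (fun x hx y hy => ?_) (fun x hx => (Finset.mem_filter.1 hx).2) hlt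
        exact hC x (Finset.mem_filter.1 hx).1 y (Finset.mem_filter.1 hy).1
    _ = _ := by simp

/-! ### Codes obtained from uniquely decodable encodings -/

/-- Pigeonhole principle: some fibre of `f` has at least the average size `2 ^ n / 2 ^ m`. -/
theorem exists_large_fiber {n m : ℕ} (f : (Fin n → Bool) → (Fin m → Bool)) :
    ∃ b, 2 ^ n ≤ (Finset.univ.filter fun x => f x = b).card * 2 ^ m := by
  by_contra! h
  have h1 := Finset.card_eq_sum_card_fiberwise (f := f) (s := Finset.univ) (t := Finset.univ)
    (fun _ _ => Finset.mem_coe.2 (Finset.mem_univ _))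
  have h2 : (∑ b : Fin m → Bool, (Finset.univ.filter fun x => f x = b).card) * 2 ^ m
      < ∑ b : Fin m → Bool, 2 ^ n := by
    rw [Finset.sum_mul]
    exact Finset.sum_lt_sum_of_nonempty Finset.univ_nonempty fun b _ => h b
  rw [← h1] at h2
  simp [mul_comm] at h2

theorem exists_midpoint {n T : ℕ} (a b : Fin n → Bool) (h : hammingDist a b ≤ 2 * T) :
    ∃ z, hammingDist z a ≤ T ∧ hammingDist z b ≤ T := by
  set S := Finset.univ.filter fun i => a i ≠ b i with hSdef
  have hS : S.card ≤ 2 * T := h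
  obtain ⟨S', hsub, hcard⟩ := Finset.exists_subset_card_eq (min_le_right T S.card)
  refine ⟨fun i => if i ∈ S' then b i else a i, ?_, ?_⟩
  · refine (Finset.card_le_card (t := S') fun i hi => ?_).trans (by omega)
    by_contra h'
    simp [h'] at hi
  · refine (Finset.card_le_card (t := S \ S') fun i hi => ?_).trans ?_
    · by_cases h' : i ∈ S' <;> simp_all
    · rw [Finset.card_sdiff_of_subset hsub]
      omega

/-- Coordinatewise addition modulo 2 of binary strings. -/
def bxor {n : ℕ} (x y : Fin n → Bool) : Fin n → Bool := fun i => xor (x i) (y i)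

theorem bxor_left_cancel {n : ℕ} {x y z : Fin n → Bool} (h : bxor x z = bxor y z) : x = y := by
  funext i
  have := congrFun h i
  simpa [bxor] using this

theorem hammingDist_bxor {n : ℕ} (c z y : Fin n → Bool) :
    hammingDist (bxor c z) y = hammingDist z (bxor y c) := by
  unfold hammingDist bxor
  congr 1
  ext i
  simp only [Finset.mem_filter, Finset.mem_univ, true_and]
  generalize c i = p, z i = q, y i = r
  revert p q r
  decide

theorem toF2_bxor {n : ℕ} (x y : Fin n → Bool) : toF2 (bxor x y) = toF2 x + toF2 y := by
  have key : ∀ p q : Bool, (if xor p q then (1 : ZMod 2) else 0)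
      = (if p then 1 else 0) + (if q then 1 else 0) := by decide
  exact funext fun i => key (x i) (y i)

theorem toF2_injective {n : ℕ} : Function.Injective (toF2 (n := n)) := by
  intro x y h
  funext i
  have := congrFun h i
  simp only [toF2] at this
  revert this
  cases x i <;> cases y i <;> decide

theorem IsLinearEncoding.congr_bxor {n m : ℕ} {C : (Fin n → Bool) → (Fin m → Bool)}
    (hC : IsLinearEncoding C) {c c' : Fin n → Bool} (h : C c = C c') (z : Fin n → Bool) :
    C (bxor c z) = C (bxor c' z) := by
  obtain ⟨f, hf⟩ := hC
  apply toF2_injective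
  rw [hf, hf, toF2_bxor, toF2_bxor, map_add, map_add, ← hf c, ← hf c', h]

theorem UniquelyDecodable.symm {n mA mB T : ℕ} {A : (Fin n → Bool) → (Fin mA → Bool)}
    {B : (Fin n → Bool) → (Fin mB → Bool)} (h : UniquelyDecodable T A B) :
    UniquelyDecodable T B A := by
  intro x y x' y' h1 h2 h3 h4
  rw [hammingDist_comm] at h1 h2
  have := h y x y' x' h1 h2 h4 h3
  simp only [Prod.mk.injEq] at this ⊢
  exact this.symm

/-- A large fibre of the first encoding has minimum distance greater than `2T`; linearity plays
no role. -/
theorem exists_code_A {n mA mB T : ℕ} {A : (Fin n → Bool) → (Fin mA → Bool)}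
    {B : (Fin n → Bool) → (Fin mB → Bool)} (h : UniquelyDecodable T A B) :
    ∃ D : Finset (Fin n → Bool),
      (∀ x ∈ D, ∀ y ∈ D, x ≠ y → 2 * T + 1 ≤ hammingDist x y) ∧ 2 ^ n ≤ D.card * 2 ^ mA := by
  obtain ⟨a, ha⟩ := exists_large_fiber A
  refine ⟨_, fun x hx x' hx' hne => ?_, ha⟩
  by_contra! hlt
  obtain ⟨z, h1, h2⟩ := exists_midpoint x x' (Nat.lt_succ_iff.1 hlt)
  rw [hammingDist_comm] at h1 h2
  rw [Finset.mem_filter] at hx hx'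
  exact hne (Prod.mk.inj (h x z x' z h1 h2 (hx.2.trans hx'.2.symm) rfl)).1

/-- If `A` is linear, the sums of a large fibre of `A` and a large fibre of `B` form a code of minimum
distance greater than `2T`, whose size is the product of the sizes of the fibres. -/
theorem exists_code_AB {n mA mB T : ℕ} {A : (Fin n → Bool) → (Fin mA → Bool)}
    {B : (Fin n → Bool) → (Fin mB → Bool)} (h : UniquelyDecodable T A B)
    (hA : IsLinearEncoding A) :
    ∃ D : Finset (Fin n → Bool),
      (∀ x ∈ D, ∀ y ∈ D, x ≠ y → 2 * T + 1 ≤ hammingDist x y) ∧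
        2 ^ (2 * n) ≤ D.card * 2 ^ (mA + mB) := by
  obtain ⟨a, ha⟩ := exists_large_fiber A
  obtain ⟨b, hb⟩ := exists_large_fiber B
  set FA := Finset.univ.filter fun x => A x = a with hFA
  set FB := Finset.univ.filter fun x => B x = b with hFB
  have key : ∀ p ∈ FB ×ˢ FA, ∀ q ∈ FB ×ˢ FA,
      hammingDist (bxor p.1 p.2) (bxor q.1 q.2) ≤ 2 * T → p = q := by
    rintro ⟨y, c⟩ hp ⟨y', c'⟩ hq hle
    simp only [Finset.mem_product, hFA, hFB, Finset.mem_filter, Finset.mem_univ, true_and]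
      at hp hq
    obtain ⟨z, h1, h2⟩ := exists_midpoint _ _ hle
    -- For a midpoint `z` of `y + c` and `y' + c'`, the pairs `(c + z, y)` and `(c' + z, y')` are
    -- admissible, and linearity of `A` gives them equal encodings.
    have := Prod.mk.inj (h (bxor c z) y (bxor c' z) y'
      (by rw [hammingDist_bxor]; exact h1) (by rw [hammingDist_bxor]; exact h2)
      (hA.congr_bxor (hp.2.trans hq.2.symm) z) (hp.1.trans hq.1.symm))
    rw [this.2, bxor_left_cancel this.1]
  refine ⟨(FB ×ˢ FA).image fun p => bxor p.1 p.2, ?_, ?_⟩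
  · intro x hx x' hx' hne
    obtain ⟨p, hp, rfl⟩ := Finset.mem_image.1 hx
    obtain ⟨q, hq, rfl⟩ := Finset.mem_image.1 hx'
    by_contra! hlt
    exact hne (by rw [key p hp q hq (by omega)])
  · rw [Finset.card_image_of_injOn, Finset.card_product]
    · calc 2 ^ (2 * n) = 2 ^ n * 2 ^ n := by ring
        _ ≤ (FB.card * 2 ^ mB) * (FA.card * 2 ^ mA) := Nat.mul_le_mul hb ha
        _ = _ := by ring
    · intro p hp q hq hpq
      refine key p hp q hq ?_
      simp only at hpq
      rw [hpq, hammingDist_self]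
      exact Nat.zero_le _

/-! ### Entropy estimate for binomial coefficients -/

/-- The function `k ↦ w ^ k / k!` attains its maximum at `k = w`. -/
theorem factorial_mul_pow_le (w k : ℕ) : w.factorial * w ^ k ≤ k.factorial * w ^ w := by
  rcases le_total w k with h | h
  · calc w.factorial * w ^ k = w.factorial * w ^ (k - w) * w ^ w := by
          rw [mul_assoc, ← pow_add, Nat.sub_add_cancel h]
      _ ≤ _ := Nat.mul_le_mul_right _ (Nat.factorial_mul_pow_sub_le_factorial h)
  · have h1 : w.factorial ≤ k.factorial * w ^ (w - k) := by
      rw [← Nat.factorial_mul_descFactorial (Nat.sub_le w k), Nat.sub_sub_self h]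
      exact Nat.mul_le_mul_left _ (Nat.descFactorial_le_pow w (w - k))
    calc w.factorial * w ^ k ≤ k.factorial * w ^ (w - k) * w ^ k := Nat.mul_le_mul_right _ h1
      _ = _ := by rw [mul_assoc, ← pow_add, Nat.sub_add_cancel h]

/-- The largest term in the binomial expansion of `(w + (n - w)) ^ n` is the one with index `w`. -/
theorem choose_mul_pow_le {n w k : ℕ} (hw : w ≤ n) (hk : k ≤ n) :
    n.choose k * (w ^ k * (n - w) ^ (n - k)) ≤ n.choose w * (w ^ w * (n - w) ^ (n - w)) := by
  have h1 := Nat.choose_mul_factorial_mul_factorial hw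
  have h2 := Nat.choose_mul_factorial_mul_factorial hk
  have h3 := Nat.mul_le_mul (factorial_mul_pow_le w k) (factorial_mul_pow_le (n - w) (n - k))
  have hpos : 0 < w.factorial * (n - w).factorial * (k.factorial * (n - k).factorial) := by
    positivity
  refine Nat.le_of_mul_le_mul_left ?_ hpos
  calc _ = (n.choose k * k.factorial * (n - k).factorial) *
        (w.factorial * w ^ k * ((n - w).factorial * (n - w) ^ (n - k))) := by ring
    _ ≤ (n.choose w * w.factorial * (n - w).factorial) *
        (k.factorial * w ^ w * ((n - k).factorial * (n - w) ^ (n - w))) := by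
          rw [h1, h2]; exact Nat.mul_le_mul_left _ h3
    _ = _ := by ring

theorem pow_le_choose_mul {n w : ℕ} (hw : w ≤ n) :
    n ^ n ≤ (n + 1) * (n.choose w * (w ^ w * (n - w) ^ (n - w))) := by
  calc n ^ n = (w + (n - w)) ^ n := by rw [Nat.add_sub_cancel' hw]
    _ = ∑ k ∈ Finset.range (n + 1), n.choose k * (w ^ k * (n - w) ^ (n - k)) := by
        rw [add_pow]
        exact Finset.sum_congr rfl fun k _ => by simp only [Nat.cast_id]; ring
    _ ≤ (Finset.range (n + 1)).card • (n.choose w * (w ^ w * (n - w) ^ (n - w))) :=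
        Finset.sum_le_card_nsmul _ _ _ fun k hk =>
          choose_mul_pow_le hw (Nat.lt_succ_iff.1 (Finset.mem_range.1 hk))
    _ = _ := by simp

/-- In natural logarithms, `C(n, w) ≥ exp (n H(w/n)) / (n + 1)`. -/
theorem log_choose_ge {n w : ℕ} (hw0 : 0 < w) (hwn : w < n) :
    n * Real.binEntropy (w / n) - Real.log (n + 1) ≤ Real.log (n.choose w) := by
  have hn : (0 : ℝ) < n := by exact_mod_cast hw0.trans hwn
  have hw : (0 : ℝ) < w := by exact_mod_cast hw0
  have hnw : (0 : ℝ) < n - w := by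
    rw [sub_pos]; exact_mod_cast hwn
  have hc : (0 : ℝ) < n.choose w := by exact_mod_cast Nat.choose_pos hwn.le
  have h : (n : ℝ) ^ n ≤ (n + 1) * (n.choose w * ((w : ℝ) ^ w * ((n : ℝ) - w) ^ (n - w))) := by
    have := pow_le_choose_mul hwn.le
    rw [← @Nat.cast_le ℝ] at this
    push_cast [Nat.cast_sub hwn.le] at this
    exact this
  have h1 := Real.log_le_log (by positivity) h
  rw [Real.log_mul (by positivity) (by positivity), Real.log_mul (by positivity) (by positivity),
    Real.log_mul (by positivity) (by positivity), Real.log_pow, Real.log_pow, Real.log_pow,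
    Nat.cast_sub hwn.le] at h1
  have h2 : n * Real.binEntropy (w / n)
      = n * Real.log n - w * Real.log w - (n - w) * Real.log (n - w) := by
    have h3 : 1 - (w : ℝ) / n = (n - w) / n := by field_simp
    rw [Real.binEntropy_eq_negMulLog_add_negMulLog_one_sub, h3, Real.negMulLog, Real.negMulLog,
      Real.log_div hw.ne' hn.ne', Real.log_div hnw.ne' hn.ne']
    field_simp
    ring
  rw [h2]
  linarith

/-! ### Asymptotic size of codes -/

theorem log_two_mul_binEnt (a : ℝ) : Real.log 2 * binEnt a = Real.binEntropy a := by
  have : Real.log 2 ≠ 0 := (Real.log_pos one_lt_two).ne'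
  rw [binEnt, Real.binEntropy_eq_negMulLog_add_negMulLog_one_sub, Real.negMulLog,
    Real.negMulLog, Real.logb, Real.logb]
  field_simp
  ring

open Filter Topology in
/-- Replacing `w/n` by its limit `p`, where `w = ⌊pn⌋ - K`, and absorbing the logarithmic terms costs at
most `ε n` for large `n`. -/
theorem eventually_entropy {p ε : ℝ} (hp : 0 ≤ p) (K : ℕ) (hε : 0 < ε) :
    ∀ᶠ n : ℕ in atTop, n * Real.binEntropy p - ε * n ≤
      n * Real.binEntropy (((⌊p * n⌋₊ - K : ℕ) : ℝ) / n) - 3 * Real.log (n + 1) - Real.log 2 := by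
  have hn : Tendsto (fun n : ℕ => (n : ℝ)) atTop atTop := tendsto_natCast_atTop_atTop
  have hw : Tendsto (fun n : ℕ => ((⌊p * n⌋₊ - K : ℕ) : ℝ) / n) atTop (𝓝 p) := by
    have hlow : Tendsto (fun n : ℕ => p - (K + 1) / (n : ℝ)) atTop (𝓝 p) := by
      simpa using tendsto_const_nhds.sub (tendsto_const_nhds.div_atTop hn)
    refine tendsto_of_tendsto_of_tendsto_of_le_of_le' hlow tendsto_const_nhds ?_ ?_
    · filter_upwards [eventually_gt_atTop 0] with n h0
      have h0' : (0 : ℝ) < n := by exact_mod_cast h0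
      rw [le_div_iff₀ h0', sub_mul, div_mul_cancel₀ _ h0'.ne']
      have h1 := Nat.lt_floor_add_one (p * n)
      have h2 : (⌊p * n⌋₊ : ℝ) ≤ ((⌊p * n⌋₊ - K : ℕ) : ℝ) + K := by
        exact_mod_cast (by omega : ⌊p * n⌋₊ ≤ ⌊p * n⌋₊ - K + K)
      linarith
    · filter_upwards [eventually_gt_atTop 0] with n h0
      have h0' : (0 : ℝ) < n := by exact_mod_cast h0
      rw [div_le_iff₀ h0']
      refine le_trans ?_ (Nat.floor_le (by positivity))
      exact_mod_cast Nat.sub_le _ _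
  have hH := (Real.binEntropy_continuous.tendsto p).comp hw
  have hlog : Tendsto (fun n : ℕ => 3 * (Real.log ((n : ℝ) + 1) / n)) atTop (𝓝 0) := by
    have h1 : Tendsto (fun n : ℕ => (n : ℝ) + 1) atTop atTop := tendsto_atTop_add_const_right _ _ hn
    have h2 := (Real.isLittleO_log_id_atTop.tendsto_div_nhds_zero).comp h1
    have h3 : Tendsto (fun n : ℕ => 1 + 1 / (n : ℝ)) atTop (𝓝 1) := by
      simpa using (tendsto_const_nhds (x := (1 : ℝ))).add
        (tendsto_const_nhds (x := (1 : ℝ)).div_atTop hn)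
    have h4 := (h2.mul h3).const_mul 3
    simp only [zero_mul, mul_zero] at h4
    refine h4.congr' ?_
    filter_upwards [eventually_gt_atTop 0] with n h0
    have h0' : (0 : ℝ) < n := by exact_mod_cast h0
    simp only [Function.comp, id]
    field_simp
  have hlog2 : Tendsto (fun n : ℕ => Real.log 2 / (n : ℝ)) atTop (𝓝 0) :=
    tendsto_const_nhds.div_atTop hn
  have hall := (hH.sub hlog).sub hlog2
  simp only [sub_zero] at hall
  filter_upwards [hall.eventually (lt_mem_nhds (sub_lt_self _ hε)), eventually_gt_atTop 0]
    with n h1 h0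
  have h0' : (0 : ℝ) < n := by exact_mod_cast h0
  have h2 := mul_le_mul_of_nonneg_left h1.le h0'.le
  simp only [Function.comp] at h2
  have h3 : (n : ℝ) * (Real.log 2 / n) = Real.log 2 := by field_simp
  have h4 : (n : ℝ) * (3 * (Real.log (n + 1) / n)) = 3 * Real.log (n + 1) := by field_simp
  rw [mul_sub, mul_sub, mul_sub, h3, h4] at h2
  linarith

open Filter in
/-- Asymptotic Elias–Bassalygo bound, in the form used for fibres: `2 ^ k ≤ |D| * 2 ^ m` forces `m`
to be large, because `|D| ≤ 2 ^ ((1 - h(p) + ε) n)` for large `n`. -/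
theorem eventually_size_bound {α p ε : ℝ} (hp0 : 0 < p) (hp1 : p < 1 / 2)
    (hpα : p * (1 - p) = α) (hε : 0 < ε) :
    ∀ᶠ n : ℕ in atTop, ∀ D : Finset (Fin n → Bool),
      (∀ x ∈ D, ∀ y ∈ D, x ≠ y → 2 * ⌊α * n⌋₊ + 1 ≤ hammingDist x y) →
      ∀ k m : ℕ, 2 ^ k ≤ D.card * 2 ^ m → (m : ℝ) ≥ k - n + binEnt p * n - ε * n := by
  have hl2 : 0 < Real.log 2 := Real.log_pos one_lt_two
  -- `K` is large enough for the Johnson bound to apply at radius `⌊p n⌋ - K`.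
  obtain ⟨K, hK⟩ := exists_nat_ge (1 / (1 - 2 * p))
  have hK1 : 1 ≤ K * (1 - 2 * p) := by
    rwa [div_le_iff₀ (by linarith)] at hK
  have hbig : ∀ᶠ n : ℕ in atTop, (K : ℝ) + 1 ≤ p * n :=
    (tendsto_natCast_atTop_atTop.const_mul_atTop hp0).eventually_ge_atTop _
  filter_upwards [hbig, eventually_entropy hp0.le K (mul_pos hε hl2), eventually_gt_atTop 0]
    with n hn hent hn0 D hD k m hkm
  have hn0' : (0 : ℝ) < n := by exact_mod_cast hn0
  have hfl : K + 1 ≤ ⌊p * n⌋₊ := Nat.le_floor (by exact_mod_cast hn)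
  obtain ⟨w, hw⟩ : ∃ w, w = ⌊p * n⌋₊ - K := ⟨_, rfl⟩
  rw [← hw] at hent
  have hw0 : 0 < w := by omega
  have hwK : (w : ℝ) + K ≤ p * n := by
    refine le_trans ?_ (Nat.floor_le (by positivity))
    exact_mod_cast (by omega : w + K ≤ ⌊p * n⌋₊)
  have hK0 : (0 : ℝ) ≤ K := Nat.cast_nonneg K
  have hwn : w < n := by
    have : (w : ℝ) < n := by nlinarith
    exact_mod_cast this
  have hα1 : α < 1 / 2 := by nlinarith
  have hα0 : 0 < α := by nlinarith
  obtain ⟨T, hT⟩ : ∃ T, T = ⌊α * n⌋₊ := ⟨_, rfl⟩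
  rw [← hT] at hD
  have hT1 : α * n < T + 1 := by rw [hT]; exact Nat.lt_floor_add_one _
  have hT2 : (T : ℝ) ≤ α * n := by rw [hT]; exact Nat.floor_le (by positivity)
  have hlt : 2 * w * (n - w) < n * (2 * T + 1) := by
    rw [← @Nat.cast_lt ℝ]
    push_cast [Nat.cast_sub hwn.le]
    -- `t (n - t)` is increasing below `n / 2`, so `w` may be replaced by `p n - K`.
    have h1 : 0 ≤ (p * n - K - w) * (n - (p * n - K) - w) :=
      mul_nonneg (by linarith) (by nlinarith)
    have h2 : 2 * ((p * n - K) * (n - (p * n - K))) ≤ 2 * α * n * n - 2 * n := by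
      rw [← hpα]
      nlinarith [mul_le_mul_of_nonneg_right hK1 hn0'.le, mul_nonneg hK0 hK0]
    nlinarith [mul_lt_mul_of_pos_right hT1 hn0']
  have helias := elias D hwn.le hD hlt
  have hDpos : 0 < D.card := by
    rcases Nat.eq_zero_or_pos D.card with h | h
    · rw [h, zero_mul] at hkm
      exact absurd hkm (by simp)
    · exact h
  have hDr : (0 : ℝ) < D.card := by exact_mod_cast hDpos
  have hcr : (0 : ℝ) < n.choose w := by exact_mod_cast Nat.choose_pos hwn.le
  have hlogA : k * Real.log 2 ≤ Real.log D.card + m * Real.log 2 := by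
    have h1 : (2 : ℝ) ^ k ≤ D.card * 2 ^ m := by exact_mod_cast hkm
    have h2 := Real.log_le_log (by positivity) h1
    rwa [Real.log_mul hDr.ne' (by positivity), Real.log_pow, Real.log_pow] at h2
  have hlogB : Real.log D.card + Real.log (n.choose w)
      ≤ n * Real.log 2 + (Real.log 2 + 2 * Real.log (n + 1)) := by
    have h1 : (D.card : ℝ) * n.choose w ≤ 2 ^ n * (n * (2 * T + 1)) := by exact_mod_cast helias
    have h2 : (n : ℝ) * (2 * T + 1) ≤ 2 * (n + 1) ^ 2 := by nlinarith
    have h3 : (D.card : ℝ) * n.choose w ≤ 2 ^ n * (2 * (n + 1) ^ 2) := h1.trans (by gcongr)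
    have h4 := Real.log_le_log (by positivity) h3
    rw [Real.log_mul hDr.ne' hcr.ne', Real.log_mul (by positivity) (by positivity),
      Real.log_mul (by positivity) (by positivity), Real.log_pow, Real.log_pow] at h4
    exact_mod_cast h4
  have hlogC := log_choose_ge hw0 hwn
  rw [← log_two_mul_binEnt p] at hent
  refine le_of_mul_le_mul_left ?_ hl2
  nlinarith

theorem stmt4 (α : ℝ) (hα0 : 0 < α) (hα1 : α < 1 / 4)
    (α' : ℝ) (hα' : α' = (1 - Real.sqrt (1 - 4 * α)) / 2) :
    (α < α' ∧ α' < 1 / 2) ∧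
    ∀ ε : ℝ, 0 < ε → ∃ n₀ : ℕ, ∀ n : ℕ, n₀ ≤ n → ∀ mA mB : ℕ,
      AchievableSemiLinear n ⌊α * n⌋₊ mA mB →
      ((mA : ℝ) + mB ≥ (1 + binEnt α') * n - ε * n ∧
       (mA : ℝ) ≥ binEnt α' * n - ε * n ∧
       (mB : ℝ) ≥ binEnt α' * n - ε * n) := by
  have hsq : Real.sqrt (1 - 4 * α) ^ 2 = 1 - 4 * α := Real.sq_sqrt (by linarith)
  have hs0 : 0 < Real.sqrt (1 - 4 * α) := Real.sqrt_pos.2 (by linarith)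
  have hs1 : Real.sqrt (1 - 4 * α) < 1 := by
    rw [Real.sqrt_lt' one_pos]
    linarith
  have hp0 : 0 < α' := by rw [hα']; linarith
  have hp1 : α' < 1 / 2 := by rw [hα']; linarith
  have hpα : α' * (1 - α') = α := by
    rw [hα']
    linear_combination -(1 / 4) * hsq
  refine ⟨⟨by nlinarith, hp1⟩, fun ε hε => ?_⟩
  obtain ⟨n₀, hn₀⟩ := Filter.eventually_atTop.1 (eventually_size_bound hp0 hp1 hpα hε)
  refine ⟨n₀, fun n hn mA mB ⟨A, B, hUD, hlin⟩ => ⟨?_, ?_, ?_⟩⟩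
  · rcases hlin with hA | hB
    · obtain ⟨D, hD, hcard⟩ := exists_code_AB hUD hA
      have := hn₀ n hn D hD _ _ hcard
      push_cast at this
      linarith
    · obtain ⟨D, hD, hcard⟩ := exists_code_AB hUD.symm hB
      have := hn₀ n hn D hD _ _ hcard
      push_cast at this
      linarith
  · obtain ⟨D, hD, hcard⟩ := exists_code_A hUD
    have := hn₀ n hn D hD _ _ hcard
    linarith
  · obtain ⟨D, hD, hcard⟩ := exists_code_A hUD.symm
    have := hn₀ n hn D hD _ _ hcard
    linarith
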